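/- Let G be a bipartite simple graph on n vertices with domination number γ, where 2 ≤ γ ≤ n−1. Then the Laplacian spectral radius of G satisfies μ(G) ≤ n − γ + 2, with equality if and only if G is isomorphic to K_{a, n−γ+2−a} ∪ (γ−2)K_1 for some integer a with 2 ≤ a ≤ ⌊(n−γ+2)/2⌋, i.e., the disjoint union of a complete bipartite graph on n−γ+2 vertices with both part sizes at least 2 and γ−2 isolated vertices. -/

import Mathlib

open SimpleGraph Matrix

/-- `S` is a dominating set of `G`: every vertex outside `S` has a neighbor in `S`. -/
def IsDominatingSet {V : Type*} (G : SimpleGraph V) (S : Set V) : Prop :=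
  ∀ v : V, v ∉ S → ∃ u ∈ S, G.Adj u v

/-- The domination number of a finite graph: the minimum cardinality of a dominating set. -/
noncomputable def dominationNumber {V : Type*} [Fintype V] (G : SimpleGraph V) : ℕ :=
  sInf {k : ℕ | ∃ S : Finset V, S.card = k ∧ IsDominatingSet G (S : Set V)}

/-!
Let `x` be an eigenvector for a nonzero eigenvalue `μ` of the Laplacian and let `uv` be an edge
maximizing `|x u - x v|`. Subtracting the eigenvalue equations at `u` and `v` and dividing by
`x u - x v` writes `μ` as a sum over the vertices in which each vertex of `N(u) ∪ N(v)` contributes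
at most `1` and the others contribute nothing, so `μ ≤ |N(u) ∪ N(v)|`. On the other hand
`{u, v} ∪ (N(u) ∪ N(v))ᶜ` is a dominating set, whence `|N(u) ∪ N(v)| ≤ n - γ + 2`.

In case of equality in a triangle-free graph every contribution is `1`. Hence `x` takes the value
`x v` on `N(u)` and `x u` on `N(v)`, every edge meeting `u` or `v` is again a maximizing edge, and
all maximizing edges have the same degree sum. A vertex outside `N(u) ∪ N(v)` with a neighbor would
then yield a dominating set of fewer than `γ` vertices or a neighborhood equal to `N(u)` or `N(v)`,
both impossible; so `G` is complete bipartite between `N(u)` and `N(v)`, plus isolated vertices.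
-/

section Domination

open Finset

variable {V : Type*} [Fintype V] {G : SimpleGraph V}

theorem dominationNumber_le_card {S : Finset V} (hS : IsDominatingSet G (S : Set V)) :
    dominationNumber G ≤ #S :=
  Nat.sInf_le ⟨S, rfl, hS⟩

theorem dominationNumber_le_card_univ : dominationNumber G ≤ Fintype.card V :=
  dominationNumber_le_card (S := univ) fun v hv ↦ absurd (mem_coe.2 (mem_univ v)) hv

variable [DecidableRel G.Adj]

theorem isDominatingSet_union_compl_biUnion_neighborFinset [DecidableEq V] (S : Finset V) :
    IsDominatingSet G (S ∪ (S.biUnion (G.neighborFinset ·))ᶜ : Finset V) := by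
  intro w hw
  simp only [coe_union, coe_compl, Set.mem_union, mem_coe, Set.mem_compl_iff, mem_biUnion,
    mem_neighborFinset, not_or, not_not] at hw
  obtain ⟨-, u, hu, huw⟩ := hw
  exact ⟨u, by simp [hu], huw⟩

theorem dominationNumber_add_degree_le (v : V) :
    dominationNumber G + G.degree v ≤ Fintype.card V := by
  classical
  have hle : dominationNumber G ≤ #(G.neighborFinset v)ᶜ := by
    simpa using dominationNumber_le_card
      (isDominatingSet_union_compl_biUnion_neighborFinset (G := G) {v})
  rw [← card_neighborFinset_eq_degree, ← card_compl_add_card (G.neighborFinset v)]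
  gcongr

variable [DecidableEq V] {u v t w : V}

theorem dominationNumber_add_card_le_of_subset {S N T : Finset V}
    (hsubset : S ∪ (S.biUnion (G.neighborFinset ·))ᶜ ⊆ T ∪ Nᶜ) :
    dominationNumber G + #N ≤ Fintype.card V + #T := by
  have hle := (dominationNumber_le_card
    (isDominatingSet_union_compl_biUnion_neighborFinset S)).trans (card_le_card hsubset)
  have hunion := card_union_le T Nᶜ
  have hcard := card_compl_add_card N
  omega

theorem dominationNumber_add_card_neighborFinset_union_le (u v : V) :
    dominationNumber G + #(G.neighborFinset u ∪ G.neighborFinset v) ≤ Fintype.card V + 2 := by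
  refine (dominationNumber_add_card_le_of_subset (S := {u, v}) (T := {u, v}) ?_).trans
    (by gcongr; exact card_le_two)
  simp only [biUnion_insert, singleton_biUnion, subset_refl]

theorem dominationNumber_add_card_neighborFinset_union_union_le
    (hut : ¬ G.Adj u t) (hvt : ¬ G.Adj v t) :
    dominationNumber G + #(G.neighborFinset u ∪ G.neighborFinset v ∪ G.neighborFinset t) ≤
      Fintype.card V + 2 := by
  refine (dominationNumber_add_card_le_of_subset (S := {u, v, t}) (T := {u, v}) ?_).trans
    (by gcongr; exact card_le_two)
  intro w hw
  simp only [mem_union, mem_compl, mem_insert, mem_singleton, mem_biUnion, mem_neighborFinset,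
    exists_eq_or_imp, exists_eq_left] at hw ⊢
  rcases hw with (rfl | rfl | rfl) | hw <;> simp_all

theorem adj_or_adj_of_dominationNumber_add_card_eq
    (htight : dominationNumber G + #(G.neighborFinset u ∪ G.neighborFinset v) =
      Fintype.card V + 2)
    (hut : ¬ G.Adj u t) (hvt : ¬ G.Adj v t) (htw : G.Adj t w) : G.Adj u w ∨ G.Adj v w := by
  have hle := dominationNumber_add_card_neighborFinset_union_union_le hut hvt
  have heq : G.neighborFinset u ∪ G.neighborFinset v =
      G.neighborFinset u ∪ G.neighborFinset v ∪ G.neighborFinset t :=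
    eq_of_subset_of_card_le subset_union_left (by omega)
  have hw := union_eq_left.1 heq.symm ((G.mem_neighborFinset t w).2 htw)
  simpa using hw

end Domination

section Laplacian

variable {V W R : Type*} [Fintype V] [DecidableEq V] [Fintype W] [DecidableEq W]
  {G : SimpleGraph V} [DecidableRel G.Adj] {H : SimpleGraph W} [DecidableRel H.Adj]

theorem hasEigenvalue_toLin'_iff_exists_mulVec_eq [CommRing R] {A : Matrix V V R} {μ : R} :
    Module.End.HasEigenvalue (toLin' A) μ ↔ ∃ x ≠ 0, A *ᵥ x = μ • x := by
  refine ⟨fun h ↦ ?_, fun ⟨x, hx0, hx⟩ ↦ ?_⟩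
  · obtain ⟨x, hx⟩ := h.exists_hasEigenvector
    exact ⟨x, hx.2, by simpa using hx.apply_eq_smul⟩
  · exact Module.End.hasEigenvalue_of_hasEigenvector
      ⟨Module.End.mem_eigenspace_iff.2 (by simpa using hx), hx0⟩

theorem lapMatrix_mulVec_apply_eq_sum_sub [NonAssocRing R] (x : V → R) (v : V) :
    (G.lapMatrix R *ᵥ x) v = ∑ w, if G.Adj v w then x v - x w else 0 := by
  rw [← Finset.sum_filter, ← neighborFinset_eq_filter, Finset.sum_sub_distrib,
    lapMatrix_mulVec_apply]
  simp

theorem lapMatrix_mulVec_comp_iso [NonAssocRing R] (e : G ≃g H) (x : W → R) :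
    G.lapMatrix R *ᵥ (x ∘ e) = (H.lapMatrix R *ᵥ x) ∘ e := by
  ext v
  simp only [lapMatrix_mulVec_apply_eq_sum_sub, Function.comp_apply]
  exact Fintype.sum_equiv e.toEquiv _ _ fun w ↦ by simp [e.map_adj_iff]

theorem lapMatrix_sum_mulVec_elim [NonAssocRing R] [DecidableRel (G ⊕g H).Adj]
    (x : V → R) (y : W → R) :
    (G ⊕g H).lapMatrix R *ᵥ Sum.elim x y =
      Sum.elim (G.lapMatrix R *ᵥ x) (H.lapMatrix R *ᵥ y) := by
  ext (v | w) <;> simp [lapMatrix_mulVec_apply_eq_sum_sub]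

theorem lapMatrix_completeBipartiteGraph_mulVec_elim [CommRing R]
    [DecidableRel (completeBipartiteGraph V W).Adj] :
    (completeBipartiteGraph V W).lapMatrix R *ᵥ
        Sum.elim (fun _ ↦ (Fintype.card W : R)) (fun _ ↦ -(Fintype.card V : R)) =
      ((Fintype.card V : R) + Fintype.card W) •
        Sum.elim (fun _ ↦ (Fintype.card W : R)) (fun _ ↦ -(Fintype.card V : R)) := by
  ext (v | w) <;> simp [lapMatrix_mulVec_apply_eq_sum_sub] <;> ring

theorem hasEigenvalue_lapMatrix_of_iso_completeBipartiteGraph_sum {α β U : Type*} [Fintype α]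
    [Fintype β] [Nonempty α] [Nonempty β] {K : SimpleGraph U} [CommRing R] [CharZero R]
    (e : G ≃g completeBipartiteGraph α β ⊕g K) :
    Module.End.HasEigenvalue (toLin' (G.lapMatrix R))
      ((Fintype.card α : R) + Fintype.card β) := by
  classical
  have : Finite U :=
    Finite.of_injective (fun z ↦ e.symm (.inr z)) (e.symm.injective.comp Sum.inr_injective)
  have := Fintype.ofFinite U
  let x : α ⊕ β → R := Sum.elim (fun _ ↦ Fintype.card β) (fun _ ↦ -(Fintype.card α : R))
  refine hasEigenvalue_toLin'_iff_exists_mulVec_eq.2 ⟨Sum.elim x 0 ∘ e, fun h ↦ ?_, ?_⟩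
  · obtain ⟨a⟩ := ‹Nonempty α›
    have := congrFun h (e.symm (.inl (.inl a)))
    simp [x] at this
  · rw [lapMatrix_mulVec_comp_iso, lapMatrix_sum_mulVec_elim,
      lapMatrix_completeBipartiteGraph_mulVec_elim, mulVec_zero]
    ext v
    rcases h : e v with w | w <;> simp [h, x]

end Laplacian

section SteepestEdge

open Finset

/-- An edge `uv` along which the function `x` on the vertices changes, and along which it changes
the most among all edges. The absolute value makes the notion symmetric in `u` and `v`. -/
structure IsSteepestEdge {V : Type*} (G : SimpleGraph V) (x : V → ℝ) (u v : V) : Prop where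
  adj : G.Adj u v
  ne : x u ≠ x v
  abs_sub_le : ∀ ⦃a b⦄, G.Adj a b → |x a - x b| ≤ |x u - x v|

/-- The part of `w` in the expansion of a Laplacian eigenvalue obtained by subtracting the
eigenvalue equations of `x` at `u` and `v` and dividing by `x u - x v`. -/
noncomputable def eigenvalueShare {V : Type*} (G : SimpleGraph V) [DecidableRel G.Adj]
    (x : V → ℝ) (u v w : V) : ℝ :=
  (if G.Adj u w then (x u - x w) / (x u - x v) else 0) +
    if G.Adj v w then (x w - x v) / (x u - x v) else 0

namespace IsSteepestEdge

variable {V : Type*} {G : SimpleGraph V} {x : V → ℝ} {u v : V}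

theorem symm (h : IsSteepestEdge G x u v) : IsSteepestEdge G x v u where
  adj := h.adj.symm
  ne := h.ne.symm
  abs_sub_le := abs_sub_comm (x u) (x v) ▸ h.abs_sub_le

theorem sub_div_sub_le_one (h : IsSteepestEdge G x u v) {a b : V} (hab : G.Adj a b) :
    (x a - x b) / (x u - x v) ≤ 1 := by
  refine (le_abs_self _).trans ?_
  rw [abs_div, div_le_one (abs_sub_pos.2 h.ne)]
  exact h.abs_sub_le hab

theorem eigenvalueShare_le [Fintype V] [DecidableEq V] [DecidableRel G.Adj]
    (h : IsSteepestEdge G x u v) (w : V) :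
    eigenvalueShare G x u v w ≤
      if w ∈ G.neighborFinset u ∪ G.neighborFinset v then 1 else 0 := by
  have hne : x u - x v ≠ 0 := sub_ne_zero.2 h.ne
  by_cases huw : G.Adj u w <;> by_cases hvw : G.Adj v w
  · have htelescope : (x u - x w) / (x u - x v) + (x w - x v) / (x u - x v) = 1 := by
      field_simp
      ring
    simp [eigenvalueShare, huw, hvw, htelescope]
  · simpa [eigenvalueShare, huw, hvw] using h.sub_div_sub_le_one huw
  · simpa [eigenvalueShare, huw, hvw] using h.sub_div_sub_le_one hvw.symm
  · simp [eigenvalueShare, huw, hvw]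

end IsSteepestEdge

variable {V : Type*} [Fintype V] [DecidableEq V] {G : SimpleGraph V} [DecidableRel G.Adj]
  {x : V → ℝ} {u v : V} {μ : ℝ}

theorem sum_eigenvalueShare (hx : G.lapMatrix ℝ *ᵥ x = μ • x) (huv : x u ≠ x v) :
    ∑ w, eigenvalueShare G x u v w = μ := by
  have hu := congrFun hx u
  have hv := congrFun hx v
  simp only [lapMatrix_mulVec_apply_eq_sum_sub, Pi.smul_apply, smul_eq_mul] at hu hv
  have hshare (w : V) : eigenvalueShare G x u v w =
      ((if G.Adj u w then x u - x w else 0) - if G.Adj v w then x v - x w else 0) /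
        (x u - x v) := by
    unfold eigenvalueShare
    split_ifs <;> ring
  simp only [hshare]
  rw [← sum_div, sum_sub_distrib, hu, hv, ← mul_sub, mul_div_cancel_right₀ _ (sub_ne_zero.2 huv)]

theorem exists_isSteepestEdge (hx : G.lapMatrix ℝ *ᵥ x ≠ 0) : ∃ u v, IsSteepestEdge G x u v := by
  obtain ⟨a, b, hab, hne⟩ : ∃ a b, G.Adj a b ∧ x a ≠ x b := by
    simpa [lapMatrix_mulVec_eq_zero_iff_forall_adj] using hx
  have : Nonempty G.Dart := ⟨⟨(a, b), hab⟩⟩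
  obtain ⟨d, hd⟩ := Finite.exists_max fun d : G.Dart ↦ |x d.fst - x d.snd|
  refine ⟨d.fst, d.snd, d.adj, fun heq ↦ hne ?_, fun p q hpq ↦ hd ⟨(p, q), hpq⟩⟩
  simpa [heq, sub_eq_zero] using hd ⟨(a, b), hab⟩

namespace IsSteepestEdge

theorem eigenvalue_le_card (h : IsSteepestEdge G x u v) (hx : G.lapMatrix ℝ *ᵥ x = μ • x) :
    μ ≤ #(G.neighborFinset u ∪ G.neighborFinset v) := by
  calc μ = ∑ w, eigenvalueShare G x u v w := (sum_eigenvalueShare hx h.ne).symm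
    _ ≤ ∑ w, if w ∈ G.neighborFinset u ∪ G.neighborFinset v then (1 : ℝ) else 0 :=
      sum_le_sum fun w _ ↦ h.eigenvalueShare_le w
    _ = #(G.neighborFinset u ∪ G.neighborFinset v) := by
      rw [sum_ite_mem, univ_inter, sum_const, nsmul_one]

theorem apply_eq_of_adj_of_not_adj (h : IsSteepestEdge G x u v)
    (hx : G.lapMatrix ℝ *ᵥ x = μ • x)
    (hμ : μ = #(G.neighborFinset u ∪ G.neighborFinset v)) {w : V} (huw : G.Adj u w)
    (hvw : ¬ G.Adj v w) : x w = x v := by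
  have hsum : ∑ w, eigenvalueShare G x u v w =
      ∑ w, if w ∈ G.neighborFinset u ∪ G.neighborFinset v then (1 : ℝ) else 0 := by
    rw [sum_eigenvalueShare hx h.ne, hμ, sum_ite_mem, univ_inter, sum_const, nsmul_one]
  have hshare := (sum_eq_sum_iff_of_le fun w _ ↦ h.eigenvalueShare_le w).1 hsum w (mem_univ w)
  have hdiv : (x u - x w) / (x u - x v) = 1 := by
    simpa [eigenvalueShare, huw, hvw] using hshare
  linarith [(div_eq_one_iff_eq (sub_ne_zero.2 h.ne)).1 hdiv]

end IsSteepestEdge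

theorem eigenvalue_lapMatrix_le_card_sub_dominationNumber_add_two
    (hμ : Module.End.HasEigenvalue (toLin' (G.lapMatrix ℝ)) μ) :
    μ ≤ (Fintype.card V : ℝ) - dominationNumber G + 2 := by
  obtain ⟨x, hx0, hx⟩ := hasEigenvalue_toLin'_iff_exists_mulVec_eq.1 hμ
  rcases eq_or_ne μ 0 with rfl | hμ0
  · have : (dominationNumber G : ℝ) ≤ Fintype.card V := mod_cast dominationNumber_le_card_univ
    linarith
  · obtain ⟨u, v, h⟩ := exists_isSteepestEdge (hx ▸ smul_ne_zero hμ0 hx0)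
    have hle := h.eigenvalue_le_card hx
    have : (dominationNumber G : ℝ) + #(G.neighborFinset u ∪ G.neighborFinset v) ≤
        Fintype.card V + 2 := mod_cast dominationNumber_add_card_neighborFinset_union_le u v
    linarith

end SteepestEdge

section Equality

open Finset

/-- `x` satisfies the Laplacian eigenvalue equation for the extremal value `n - γ + 2`. The zero
function is allowed. -/
def IsExtremalFunction {V : Type*} [Fintype V] [DecidableEq V] (G : SimpleGraph V)
    [DecidableRel G.Adj] (x : V → ℝ) : Prop :=
  G.lapMatrix ℝ *ᵥ x = ((Fintype.card V : ℝ) - dominationNumber G + 2) • x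

theorem disjoint_neighborFinset_of_adj {V : Type*} {G : SimpleGraph V} (hfree : G.CliqueFree 3)
    {u v : V} [Fintype (G.neighborSet u)] [Fintype (G.neighborSet v)] (huv : G.Adj u v) :
    Disjoint (G.neighborFinset u) (G.neighborFinset v) := by
  classical
  refine Finset.disjoint_left.2 fun w huw hvw ↦ hfree {u, v, w} (is3Clique_triple_iff.2 ?_)
  exact ⟨huv, by simpa using huw, by simpa using hvw⟩

variable {V : Type*} [Fintype V] [DecidableEq V] {G : SimpleGraph V} [DecidableRel G.Adj]
  {x : V → ℝ} {p t u v w : V}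

namespace IsExtremalFunction

theorem dominationNumber_add_card_eq (hx : IsExtremalFunction G x) (h : IsSteepestEdge G x u v) :
    dominationNumber G + #(G.neighborFinset u ∪ G.neighborFinset v) = Fintype.card V + 2 := by
  refine (dominationNumber_add_card_neighborFinset_union_le u v).antisymm ?_
  have := h.eigenvalue_le_card hx
  have : (Fintype.card V : ℝ) + 2 ≤
      dominationNumber G + #(G.neighborFinset u ∪ G.neighborFinset v) := by linarith
  exact_mod_cast this

theorem dominationNumber_add_degree_add_degree_eq (hx : IsExtremalFunction G x)
    (hfree : G.CliqueFree 3) (h : IsSteepestEdge G x u v) :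
    dominationNumber G + (G.degree u + G.degree v) = Fintype.card V + 2 := by
  rw [← hx.dominationNumber_add_card_eq h,
    card_union_of_disjoint (disjoint_neighborFinset_of_adj hfree h.adj),
    card_neighborFinset_eq_degree, card_neighborFinset_eq_degree]

theorem two_le_degree (hx : IsExtremalFunction G x) (hfree : G.CliqueFree 3)
    (h : IsSteepestEdge G x u v) : 2 ≤ G.degree u := by
  have := hx.dominationNumber_add_degree_add_degree_eq hfree h
  have := dominationNumber_add_degree_le (G := G) v
  omega

theorem apply_eq_of_adj (hx : IsExtremalFunction G x) (hfree : G.CliqueFree 3)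
    (h : IsSteepestEdge G x u v) (huw : G.Adj u w) : x w = x v := by
  have hμ : (Fintype.card V : ℝ) - dominationNumber G + 2 =
      #(G.neighborFinset u ∪ G.neighborFinset v) := by
    have : (dominationNumber G : ℝ) + #(G.neighborFinset u ∪ G.neighborFinset v) =
        Fintype.card V + 2 := mod_cast hx.dominationNumber_add_card_eq h
    linarith
  refine h.apply_eq_of_adj_of_not_adj hx hμ huw fun hvw ↦ ?_
  exact Finset.disjoint_left.1 (disjoint_neighborFinset_of_adj hfree h.adj)
    ((G.mem_neighborFinset u w).2 huw) ((G.mem_neighborFinset v w).2 hvw)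

theorem isSteepestEdge_of_adj (hx : IsExtremalFunction G x) (hfree : G.CliqueFree 3)
    (h : IsSteepestEdge G x u v) (huw : G.Adj u w) : IsSteepestEdge G x u w where
  adj := huw
  ne := hx.apply_eq_of_adj hfree h huw ▸ h.ne
  abs_sub_le := hx.apply_eq_of_adj hfree h huw ▸ h.abs_sub_le

theorem degree_eq_of_adj (hx : IsExtremalFunction G x) (hfree : G.CliqueFree 3)
    (h : IsSteepestEdge G x u v) (hvp : G.Adj v p) : G.degree p = G.degree u := by
  have huv := hx.dominationNumber_add_degree_add_degree_eq hfree h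
  have hvp := hx.dominationNumber_add_degree_add_degree_eq hfree
    (hx.isSteepestEdge_of_adj hfree h.symm hvp)
  omega

theorem adj_of_apply_eq (hx : IsExtremalFunction G x) (hfree : G.CliqueFree 3)
    (h : IsSteepestEdge G x u v) (hw : G.Adj u w ∨ G.Adj v w) (hxw : x w = x v) : G.Adj u w :=
  hw.resolve_right fun hvw ↦ h.ne ((hx.apply_eq_of_adj hfree h.symm hvw).symm.trans hxw)

theorem not_adj_of_adj (hx : IsExtremalFunction G x) (hfree : G.CliqueFree 3)
    (h : IsSteepestEdge G x u v) (hut : ¬ G.Adj u t) (hvt : ¬ G.Adj v t) (hvp : G.Adj v p) :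
    ¬ G.Adj t p := by
  intro htp
  have hvp_steepest := hx.isSteepestEdge_of_adj hfree h.symm hvp
  have htp_steepest := (hx.isSteepestEdge_of_adj hfree hvp_steepest.symm htp.symm).symm
  have hsubset : G.neighborFinset t ⊆ G.neighborFinset v := by
    intro w hw
    rw [mem_neighborFinset] at hw ⊢
    have hxw : x w = x u := (hx.apply_eq_of_adj hfree htp_steepest hw).trans
      (hx.apply_eq_of_adj hfree h.symm hvp)
    exact hx.adj_of_apply_eq hfree h.symm (adj_or_adj_of_dominationNumber_add_card_eq
      (hx.dominationNumber_add_card_eq h) hut hvt hw).symm hxw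
  have heq : G.neighborFinset t = G.neighborFinset v :=
    eq_of_subset_of_card_le hsubset (hx.degree_eq_of_adj hfree hvp_steepest htp.symm).ge
  have htu : u ∈ G.neighborFinset t := heq ▸ (G.mem_neighborFinset v u).2 h.adj.symm
  exact hut ((G.mem_neighborFinset t u).1 htu).symm

theorem adj_or_adj_of_adj (hx : IsExtremalFunction G x) (hfree : G.CliqueFree 3)
    (h : IsSteepestEdge G x u v) (htw : G.Adj t w) : G.Adj u t ∨ G.Adj v t := by
  by_contra! ⟨hut, hvt⟩
  rcases adj_or_adj_of_dominationNumber_add_card_eq (hx.dominationNumber_add_card_eq h)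
    hut hvt htw with huw | hvw
  · exact hx.not_adj_of_adj hfree h.symm hvt hut huw htw
  · exact hx.not_adj_of_adj hfree h hut hvt hvw htw

theorem neighborFinset_eq_of_adj (hx : IsExtremalFunction G x) (hfree : G.CliqueFree 3)
    (h : IsSteepestEdge G x u v) (hvp : G.Adj v p) :
    G.neighborFinset p = G.neighborFinset u := by
  refine eq_of_subset_of_card_le (fun w hw ↦ ?_) (hx.degree_eq_of_adj hfree h hvp).ge
  rw [mem_neighborFinset] at hw ⊢
  have hpv_steepest := (hx.isSteepestEdge_of_adj hfree h.symm hvp).symm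
  exact hx.adj_of_apply_eq hfree h (hx.adj_or_adj_of_adj hfree h hw.symm)
    (hx.apply_eq_of_adj hfree hpv_steepest hw)

theorem adj_iff (hx : IsExtremalFunction G x) (hfree : G.CliqueFree 3)
    (h : IsSteepestEdge G x u v) (p q : V) :
    G.Adj p q ↔ G.Adj u p ∧ G.Adj v q ∨ G.Adj v p ∧ G.Adj u q := by
  have hu (hup : G.Adj u p) : G.Adj p q ↔ G.Adj v q := by
    rw [← mem_neighborFinset, hx.neighborFinset_eq_of_adj hfree h.symm hup, mem_neighborFinset]
  have hv (hvp : G.Adj v p) : G.Adj p q ↔ G.Adj u q := by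
    rw [← mem_neighborFinset, hx.neighborFinset_eq_of_adj hfree h hvp, mem_neighborFinset]
  have hp := hx.adj_or_adj_of_adj hfree h (t := p) (w := q)
  tauto

end IsExtremalFunction

theorem nonempty_iso_completeBipartiteGraph_sum_bot {V : Type*} {G : SimpleGraph V} {A B : Set V}
    (hAB : Disjoint A B) (hadj : ∀ p q, G.Adj p q ↔ p ∈ A ∧ q ∈ B ∨ p ∈ B ∧ q ∈ A) :
    Nonempty (G ≃g completeBipartiteGraph A B ⊕g (⊥ : SimpleGraph ↥(A ∪ B)ᶜ)) := by
  classical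
  refine ⟨RelIso.symm ⟨((Equiv.Set.union hAB).symm.sumCongr (Equiv.refl _)).trans
    (Equiv.Set.sumCompl (A ∪ B)), ?_⟩⟩
  have hB (p : A) : (p : V) ∉ B := Set.disjoint_left.1 hAB p.2
  have hA (p : B) : (p : V) ∉ A := Set.disjoint_right.1 hAB p.2
  have hcompl (p : ↥(A ∪ B)ᶜ) : (p : V) ∉ A ∧ (p : V) ∉ B := by simpa using p.2
  rintro ((p | p) | p) ((q | q) | q) <;> simp [hadj, hA, hB, hcompl]

theorem exists_iso_completeBipartiteGraph_sum_bot (hfree : G.CliqueFree 3)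
    (hμ : Module.End.HasEigenvalue (toLin' (G.lapMatrix ℝ))
      ((Fintype.card V : ℝ) - dominationNumber G + 2)) :
    ∃ a b c : ℕ, 2 ≤ a ∧ a ≤ b ∧ a + b + dominationNumber G = Fintype.card V + 2 ∧
      c + 2 = dominationNumber G ∧
      Nonempty (G ≃g completeBipartiteGraph (Fin a) (Fin b) ⊕g (⊥ : SimpleGraph (Fin c))) := by
  obtain ⟨x, hx0, hx : IsExtremalFunction G x⟩ := hasEigenvalue_toLin'_iff_exists_mulVec_eq.1 hμ
  have hne : (Fintype.card V : ℝ) - dominationNumber G + 2 ≠ 0 := by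
    have : (dominationNumber G : ℝ) ≤ Fintype.card V := mod_cast dominationNumber_le_card_univ
    linarith
  obtain ⟨u, v, h⟩ := exists_isSteepestEdge (hx ▸ smul_ne_zero hne hx0)
  wlog hle : G.degree u ≤ G.degree v generalizing u v
  · exact this v u h.symm (Nat.le_of_not_le hle)
  have hdegree := hx.dominationNumber_add_degree_add_degree_eq hfree h
  have hAB : Disjoint (G.neighborSet u) (G.neighborSet v) := by
    simpa [← Finset.disjoint_coe] using disjoint_neighborFinset_of_adj hfree h.adj
  obtain ⟨e⟩ := nonempty_iso_completeBipartiteGraph_sum_bot hAB (hx.adj_iff hfree h)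
  have hcard := Fintype.card_congr e.toEquiv
  rw [Fintype.card_sum, Fintype.card_sum, card_neighborSet_eq_degree,
    card_neighborSet_eq_degree] at hcard
  let eu := Fintype.equivFinOfCardEq (G.card_neighborSet_eq_degree u)
  let ev := Fintype.equivFinOfCardEq (G.card_neighborSet_eq_degree v)
  let erest : (⊥ : SimpleGraph ↥(G.neighborSet u ∪ G.neighborSet v)ᶜ) ≃g
    (⊥ : SimpleGraph (Fin _)) := ⟨Fintype.equivFin _, by simp⟩
  exact ⟨_, _, _, hx.two_le_degree hfree h, hle, by omega, by omega,
    ⟨e.trans (Iso.sumCongr (completeBipartiteGraphCongr eu ev) erest)⟩⟩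

end Equality

theorem bipartite_laplacian_spectral_radius_le_and_eq_iff_general
    {V : Type*} [Fintype V] [DecidableEq V] (G : SimpleGraph V) [DecidableRel G.Adj]
    (n γ : ℕ) (hn : Fintype.card V = n) (hγ : dominationNumber G = γ) :
    (∀ μ : ℝ, Module.End.HasEigenvalue (Matrix.toLin' (G.lapMatrix ℝ)) μ →
      μ ≤ (n : ℝ) - γ + 2) ∧
    (G.CliqueFree 3 →
      (Module.End.HasEigenvalue (Matrix.toLin' (G.lapMatrix ℝ)) ((n : ℝ) - γ + 2) ↔
        ∃ a : ℕ, 2 ≤ a ∧ a ≤ (n - γ + 2) / 2 ∧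
          Nonempty (G ≃g ((completeBipartiteGraph (Fin a) (Fin (n - γ + 2 - a))) ⊕g
            (⊥ : SimpleGraph (Fin (γ - 2))))))) := by
  subst hn hγ
  refine ⟨fun μ ↦ eigenvalue_lapMatrix_le_card_sub_dominationNumber_add_two,
    fun hfree ↦ ⟨fun hμ ↦ ?_, ?_⟩⟩
  · obtain ⟨a, b, c, ha, hab, hcard, hc, e⟩ := exists_iso_completeBipartiteGraph_sum_bot hfree hμ
    obtain rfl : b = Fintype.card V - dominationNumber G + 2 - a := by omega
    obtain rfl : c = dominationNumber G - 2 := by omega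
    exact ⟨a, ha, by omega, e⟩
  · rintro ⟨a, ha, hle, ⟨e⟩⟩
    have : NeZero a := ⟨by omega⟩
    have : NeZero (Fintype.card V - dominationNumber G + 2 - a) := ⟨by omega⟩
    convert hasEigenvalue_lapMatrix_of_iso_completeBipartiteGraph_sum (R := ℝ) e using 1
    have := dominationNumber_le_card_univ (G := G)
    rw [Fintype.card_fin, Fintype.card_fin, Nat.cast_sub (by omega), Nat.cast_add,
      Nat.cast_sub this]
    push_cast
    ring

theorem bipartite_laplacian_spectral_radius_le_and_eq_iff
    {V : Type*} [Fintype V] [DecidableEq V] (G : SimpleGraph V) [DecidableRel G.Adj]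
    (n γ : ℕ) (hn : Fintype.card V = n) (hγ : dominationNumber G = γ)
    (hγ2 : 2 ≤ γ) (hγn : γ ≤ n - 1)
    (hbip : G.Colorable 2) :
    (∀ μ : ℝ, Module.End.HasEigenvalue (Matrix.toLin' (G.lapMatrix ℝ)) μ →
      μ ≤ (n : ℝ) - γ + 2) ∧
    (Module.End.HasEigenvalue (Matrix.toLin' (G.lapMatrix ℝ)) ((n : ℝ) - γ + 2) ↔
      ∃ a : ℕ, 2 ≤ a ∧ a ≤ (n - γ + 2) / 2 ∧
        Nonempty (G ≃g ((completeBipartiteGraph (Fin a) (Fin (n - γ + 2 - a))) ⊕g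
          (⊥ : SimpleGraph (Fin (γ - 2)))))) :=
  (bipartite_laplacian_spectral_radius_le_and_eq_iff_general G n γ hn hγ).imp_right
    (· (hbip.cliqueFree (by norm_num)))
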